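/- For u_p = u(1^ω,(EERR)^ω) and k ≥ 2, the lengths satisfy |s_{2k+1}| < |w_{2k+1}| < |s_{2k+3}|. -/

import Mathlib

abbrev Word := List Bool

/-- The exchange antimorphism `E`: complement each letter and reverse. -/
def Ebar (w : Word) : Word := (w.map Bool.not).reverse

def IsPal (w : Word) : Prop := w.reverse = w
def IsEPal (w : Word) : Prop := Ebar w = w

open Classical in
lemma exists_minLength {Q : Word → Prop} (hex : ∃ v, Q v) :
    ∃ v, Q v ∧ ∀ v', Q v' → v.length ≤ v'.length := by
  classical
  have h : ∃ n, ∃ v, Q v ∧ v.length = n := ⟨_, hex.choose, hex.choose_spec, rfl⟩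
  obtain ⟨v, hv, hlen⟩ := Nat.find_spec h
  exact ⟨v, hv, fun v' hv' => by
    rw [hlen]; exact Nat.find_min' h ⟨v', hv', rfl⟩⟩

lemma pal_ext (w : Word) : ∃ v, w <+: v ∧ IsPal v :=
  ⟨w ++ w.reverse, List.prefix_append _ _, by simp [IsPal]⟩

lemma epal_ext (w : Word) : ∃ v, w <+: v ∧ IsEPal v :=
  ⟨w ++ Ebar w, List.prefix_append _ _, by
    simp [IsEPal, Ebar, List.map_reverse, List.map_map, Function.comp_def, Bool.not_not]⟩

/-- The palindromic closure: the shortest palindrome having `w` as a prefix. -/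
noncomputable def palCl (w : Word) : Word := (exists_minLength (pal_ext w)).choose

/-- The pseudopalindromic closure: the shortest `E`-palindrome having `w` as a prefix. -/
noncomputable def epalCl (w : Word) : Word := (exists_minLength (epal_ext w)).choose

/-- Prefixes of the generalized pseudostandard word `u(1^ω, (EERR)^ω)`
(the letter `1` is `true`). -/
noncomputable def wp : ℕ → Word
  | 0 => []
  | n+1 => if (n+1) % 4 = 1 ∨ (n+1) % 4 = 2
           then epalCl (wp n ++ [true])
           else palCl (wp n ++ [true])

/-- Factors of `u_p`. -/
def FactorUp (v : Word) : Prop := ∃ n, v <:+: wp n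

/-- Factor complexity of `u_p`. -/
noncomputable def Cp (n : ℕ) : ℕ := Set.ncard {v : Word | FactorUp v ∧ v.length = n}

/-- The weak bispecial candidate `s_{4k+1}` (an overlap product). -/
noncomputable def s1 (k : ℕ) : Word :=
  (wp (4*k-3)).reverse ++ (wp (4*k-1)).drop (wp (4*k-4)).length
    ++ (wp (4*k-3)).drop (wp (4*k-4)).length

/-- The weak bispecial candidate `s_{4k+3}` (an overlap product). -/
noncomputable def s3 (k : ℕ) : Word :=
  Ebar (wp (4*k-1)) ++ (wp (4*k+1)).drop (wp (4*k-2)).length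
    ++ (wp (4*k-1)).drop (wp (4*k-2)).length

/-- `sOdd k = s_{2k+1}`. -/
noncomputable def sOdd (k : ℕ) : Word := if k % 2 = 0 then s1 (k/2) else s3 (k/2)

lemma palCl_spec (w : Word) : w <+: palCl w ∧ IsPal (palCl w) :=
  (exists_minLength (pal_ext w)).choose_spec.1

lemma epalCl_spec (w : Word) : w <+: epalCl w ∧ IsEPal (epalCl w) :=
  (exists_minLength (epal_ext w)).choose_spec.1

/-- `true` when `w_n` is an `E`-palindrome. -/
def ety (n : ℕ) : Bool := decide (n % 4 = 1 ∨ n % 4 = 2)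

lemma wp_prefix (n : ℕ) : wp n ++ [true] <+: wp (n+1) := by
  rw [wp]
  split_ifs
  · exact (epalCl_spec _).1
  · exact (palCl_spec _).1

lemma wp_refl (n i j : ℕ) (h : i + j + 1 = (wp n).length) :
    (wp n)[i]? = ((wp n)[j]?).map (xor (ety n)) := by
  have hp : ety n = false → IsPal (wp n) := by
    intro he
    cases n with
    | zero => simp [wp, IsPal]
    | succ n =>
      have : ¬ ((n+1) % 4 = 1 ∨ (n+1) % 4 = 2) := by simpa [ety] using he
      rw [wp, if_neg this]
      exact (palCl_spec _).2
  have hq : ety n = true → IsEPal (wp n) := by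
    intro he
    cases n with
    | zero => simp [ety] at he
    | succ n =>
      have : ((n+1) % 4 = 1 ∨ (n+1) % 4 = 2) := by simpa [ety] using he
      rw [wp, if_pos this]
      exact (epalCl_spec _).2
  have hi : (wp n).length - 1 - i = j := by omega
  cases he : ety n with
  | false =>
    have := hp he
    conv_lhs => rw [← this]
    rw [List.getElem?_reverse (by omega), hi]
    cases (wp n)[j]? <;> simp
  | true =>
    have := hq he
    conv_lhs => rw [← this]
    rw [Ebar, List.getElem?_reverse (by simp; omega)]
    simp only [List.length_map, hi, List.getElem?_map]
    cases (wp n)[j]? <;> simp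

lemma wp_lt (n : ℕ) : (wp n).length < (wp (n+1)).length := by
  have := (wp_prefix n).length_le
  simp at this
  omega

lemma wp_mono : StrictMono (fun n => (wp n).length) := strictMono_nat_of_lt_succ wp_lt

lemma wp_pre {m n : ℕ} (h : m ≤ n) : wp m <+: wp n := by
  induction n, h using Nat.le_induction with
  | base => exact List.prefix_rfl
  | succ n _ ih => exact ih.trans ((List.prefix_append _ _).trans (wp_prefix n))

/-- The infinite word. -/
noncomputable def uu (i : ℕ) : Bool := ((wp (i+1))[i]?).getD false

lemma wp_get (n i : ℕ) (h : i < (wp n).length) : (wp n)[i]? = some (uu i) := by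
  have h1 : i < (wp (i+1)).length := lt_of_lt_of_le (Nat.lt_succ_self i) (wp_mono.le_apply (x := i+1))
  have h2 : (wp (i+1))[i]? = some (uu i) := by
    simp [uu, h1]
  rw [← h2]
  rcases le_total n (i+1) with hh | hh
  · obtain ⟨t, ht⟩ := wp_pre hh
    rw [← ht, List.getElem?_append_left h]
  · obtain ⟨t, ht⟩ := wp_pre hh
    rw [← ht, List.getElem?_append_left h1]

lemma uu_refl (n i j : ℕ) (h : i + j + 1 = (wp n).length) : uu i = xor (ety n) (uu j) := by
  have := wp_refl n i j h
  rw [wp_get n i (by omega), wp_get n j (by omega)] at this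
  simpa using this

lemma uu_len (n : ℕ) : uu (wp n).length = true := by
  have := wp_get (n+1) (wp n).length (wp_lt n)
  obtain ⟨t, ht⟩ := wp_prefix n
  rw [← ht] at this
  simpa using this.symm

/-- If `w_m`, `w_n` (`m < n`) have distinct types, `w_{n+1}` is long. -/
lemma growth (m n : ℕ) (hmn : m < n) (ht : ety m ≠ ety n) :
    (wp n).length + (wp m).length < (wp (n+1)).length := by
  by_contra hc
  have h0 := wp_lt n
  have h1 := wp_mono hmn
  simp only at h1
  obtain ⟨P, hP⟩ := Nat.exists_eq_add_of_lt h0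
  have e1 := uu_refl (n+1) (wp m).length ((wp (n+1)).length - 1 - (wp m).length) (by omega)
  have e2 := uu_refl n ((wp (n+1)).length - 1 - (wp m).length) ((wp m).length - (P+1)) (by omega)
  have e3 := uu_refl m ((wp m).length - (P+1)) P (by omega)
  have e4 := uu_refl (n+1) (wp n).length P (by omega)
  rw [uu_len] at e1 e4
  rw [e2, e3] at e1
  revert e1 e4 ht
  cases ety m <;> cases ety n <;> cases ety (n+1) <;> cases uu P <;> simp

lemma key (m : ℕ) (hm : m % 2 = 0) :
    (wp (m+1)).length + 2 * (wp m).length < (wp (m+3)).length := by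
  have a := growth m (m+1) (by omega) (by simp only [ety, ne_eq, decide_eq_decide]; omega)
  have b := growth m (m+2) (by omega) (by simp only [ety, ne_eq, decide_eq_decide]; omega)
  simp only [show m+1+1 = m+2 from rfl, show m+2+1 = m+3 from rfl] at a b
  omega

lemma sOdd_len (k : ℕ) (hk : 2 ≤ k) : (sOdd k).length + 2 * (wp (2*k-4)).length =
    2 * (wp (2*k-3)).length + (wp (2*k-1)).length := by
  have h1 := wp_mono (show 2*k-4 < 2*k-3 by omega)
  have h2 := wp_mono (show 2*k-4 < 2*k-1 by omega)
  simp only at h1 h2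
  rcases Nat.even_or_odd' k with ⟨c, rfl | rfl⟩
  · have : (2*c) % 2 = 0 := by omega
    rw [sOdd, if_pos this, s1]
    simp only [List.length_append, List.length_drop, List.length_reverse]
    rw [show 2*c/2 = c by omega]
    rw [show 2*(2*c) = 4*c by ring] at *
    omega
  · have : ¬ (2*c+1) % 2 = 0 := by omega
    rw [sOdd, if_neg this, s3, Ebar]
    simp only [List.length_append, List.length_drop, List.length_reverse, List.length_map]
    rw [show (2*c+1)/2 = c by omega]
    rw [show 2*(2*c+1)-4 = 4*c-2 by omega, show 2*(2*c+1)-3 = 4*c-1 by omega] at *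
    rw [show 2*(2*c+1)-1 = 4*c+1 by omega] at *
    omega

/-- for `k ≥ 2`, `|s_{2k+1}| < |w_{2k+1}| < |s_{2k+3}|`. -/
theorem length_interlacing (k : ℕ) (hk : 2 ≤ k) :
    (sOdd k).length < (wp (2*k+1)).length ∧
      (wp (2*k+1)).length < (sOdd (k+1)).length := by
  have a := sOdd_len k hk
  have b := sOdd_len (k+1) (by omega)
  have c := key (2*k-2) (by omega)
  have h1 := wp_mono (show 2*k-3 < 2*k-2 by omega)
  have h2 := wp_mono (show 2*k-2 < 2*k-1 by omega)
  simp only at h1 h2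
  rw [show 2*k-2+1 = 2*k-1 by omega, show 2*k-2+3 = 2*k+1 by omega] at c
  rw [show 2*(k+1)-4 = 2*k-2 by omega, show 2*(k+1)-3 = 2*k-1 by omega,
    show 2*(k+1)-1 = 2*k+1 by omega] at b
  omega
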